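/- arXiv:1504.00094 — 8 statements merged into one kernel-verified Lean document; each statement's English description precedes it below -/
import Mathlib

section
/- For every real N×N matrix A and all real numbers t and s, the matrix cosine series satisfies the addition law g(t+s, A) + g(t−s, A) = 2 * g(t, A) * g(s, A), where g(t, A) := ∑_{j=0}^∞ (t^{2j}/(2j)!) • A^j. -/
/-!
The series for `g(t, A)` and `g(s, A)` converge absolutely, being dominated termwise by the
exponential series of `t² A` and `s² A`; this works in any real Banach algebra.
Their product is therefore the Cauchy product, and
comparing the coefficients of `A ^ n` reduces the law to the scalar identity
`(t + s)^(2n) + (t - s)^(2n) = 2 ∑_{k ≤ n} (2n choose 2k) t^(2k) s^(2(n-k))`: the odd terms of the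
two binomial expansions cancel.
-/

/-- The matrix cosine series `g(t, A) = ∑_{j=0}^∞ (t^{2j}/(2j)!) • A^j`,
representing `cos(t√(−A))`. -/
noncomputable def matCos {N : ℕ} (t : ℝ) (A : Matrix (Fin N) (Fin N) ℝ) :
    Matrix (Fin N) (Fin N) ℝ :=
  ∑' j : ℕ, (t ^ (2 * j) / ((2 * j).factorial : ℝ)) • A ^ j

lemma sum_range_even_odd (f : ℕ → ℝ) (n : ℕ) :
    ∑ m ∈ Finset.range (2 * n + 1), f m
      = ∑ k ∈ Finset.range (n + 1), f (2 * k) + ∑ k ∈ Finset.range n, f (2 * k + 1) := by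
  induction n with
  | zero => simp
  | succ n ih =>
    rw [show 2 * (n + 1) + 1 = (2 * n + 1) + 1 + 1 by ring, Finset.sum_range_succ,
      Finset.sum_range_succ, ih, Finset.sum_range_succ _ (n + 1),
      Finset.sum_range_succ (fun k => f (2 * k + 1)) n, show 2 * (n + 1) = 2 * n + 1 + 1 by ring]
    ring

lemma add_pow_add_sub_pow_even (t s : ℝ) (n : ℕ) :
    (t + s) ^ (2 * n) + (t - s) ^ (2 * n)
      = 2 * ∑ k ∈ Finset.range (n + 1),
          t ^ (2 * k) * s ^ (2 * (n - k)) * ((2 * n).choose (2 * k) : ℝ) := by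
  -- Moving the sign to `t` makes it depend on the summation index, the exponent of `t`.
  have h : (t - s) ^ (2 * n) = (-t + s) ^ (2 * n) := by
    rw [pow_mul, pow_mul]; congr 1; ring
  rw [h, add_pow, add_pow, ← Finset.sum_add_distrib, sum_range_even_odd, Finset.mul_sum]
  have hodd : ∀ k ∈ Finset.range n,
      t ^ (2 * k + 1) * s ^ (2 * n - (2 * k + 1)) * ((2 * n).choose (2 * k + 1) : ℝ)
        + (-t) ^ (2 * k + 1) * s ^ (2 * n - (2 * k + 1)) * ((2 * n).choose (2 * k + 1) : ℝ)
        = 0 := by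
    intro k _
    rw [Odd.neg_pow ⟨k, rfl⟩]; ring
  rw [Finset.sum_eq_zero hodd, add_zero]
  refine Finset.sum_congr rfl fun k _ => ?_
  rw [Even.neg_pow (even_two_mul k), Nat.mul_sub]; ring

lemma cos_coeff_cauchy (t s : ℝ) (n : ℕ) :
    (t + s) ^ (2 * n) / ((2 * n).factorial : ℝ) + (t - s) ^ (2 * n) / ((2 * n).factorial : ℝ)
      = 2 * ∑ k ∈ Finset.range (n + 1), t ^ (2 * k) / ((2 * k).factorial : ℝ) *
          (s ^ (2 * (n - k)) / ((2 * (n - k)).factorial : ℝ)) := by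
  rw [← add_div, add_pow_add_sub_pow_even, mul_div_assoc, Finset.sum_div]
  congr 1
  refine Finset.sum_congr rfl fun k hk => ?_
  have hk' : 2 * k ≤ 2 * n := by have := Finset.mem_range.1 hk; omega
  rw [Nat.cast_choose ℝ hk', ← Nat.mul_sub]
  have h1 : ((2 * n).factorial : ℝ) ≠ 0 := by positivity
  have h2 : ((2 * k).factorial : ℝ) ≠ 0 := by positivity
  have h3 : ((2 * (n - k)).factorial : ℝ) ≠ 0 := by positivity
  field_simp

section

variable {R : Type*} [NormedRing R] [NormedAlgebra ℝ R]

lemma summable_norm_cosSeries (t : ℝ) (A : R) :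
    Summable fun j : ℕ => ‖(t ^ (2 * j) / ((2 * j).factorial : ℝ)) • A ^ j‖ := by
  refine Summable.of_nonneg_of_le (fun _ => norm_nonneg _) (fun j => ?_)
    (NormedSpace.norm_expSeries_summable' (𝕂 := ℝ) (t ^ 2 • A))
  rw [smul_pow, smul_smul, norm_smul, norm_smul]
  refine mul_le_mul_of_nonneg_right ?_ (norm_nonneg _)
  rw [← pow_mul, div_eq_inv_mul, norm_mul, norm_mul]
  refine mul_le_mul_of_nonneg_right ?_ (norm_nonneg _)
  rw [norm_inv, norm_inv, Real.norm_natCast, Real.norm_natCast]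
  have : (j.factorial : ℝ) ≤ ((2 * j).factorial : ℝ) := by
    exact_mod_cast Nat.factorial_le (by omega)
  gcongr

lemma hasSum_cosSeries_mul [CompleteSpace R] (t s : ℝ) (A : R) :
    HasSum (fun n : ℕ => (∑ k ∈ Finset.range (n + 1), t ^ (2 * k) / ((2 * k).factorial : ℝ) *
          (s ^ (2 * (n - k)) / ((2 * (n - k)).factorial : ℝ))) • A ^ n)
      ((∑' j : ℕ, (t ^ (2 * j) / ((2 * j).factorial : ℝ)) • A ^ j) *
        ∑' j : ℕ, (s ^ (2 * j) / ((2 * j).factorial : ℝ)) • A ^ j) := by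
  convert hasSum_sum_range_mul_of_summable_norm (summable_norm_cosSeries t A)
    (summable_norm_cosSeries s A) using 2 with n
  rw [Finset.sum_smul]
  refine Finset.sum_congr rfl fun k hk => ?_
  have hk' : k + (n - k) = n := by have := Finset.mem_range.1 hk; omega
  rw [smul_mul_smul_comm, ← pow_add, hk']

/-- The addition law in an arbitrary real Banach algebra. -/
lemma cosSeries_add_law [CompleteSpace R] (A : R) (t s : ℝ) :
    (∑' j : ℕ, ((t + s) ^ (2 * j) / ((2 * j).factorial : ℝ)) • A ^ j) +
        ∑' j : ℕ, ((t - s) ^ (2 * j) / ((2 * j).factorial : ℝ)) • A ^ j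
      = 2 * ((∑' j : ℕ, (t ^ (2 * j) / ((2 * j).factorial : ℝ)) • A ^ j) *
        ∑' j : ℕ, (s ^ (2 * j) / ((2 * j).factorial : ℝ)) • A ^ j) := by
  have h1 := (summable_norm_cosSeries (t + s) A).of_norm.hasSum.add
    (summable_norm_cosSeries (t - s) A).of_norm.hasSum
  have h2 := (hasSum_cosSeries_mul t s A).const_smul (2 : ℝ)
  simp only [← add_smul, cos_coeff_cauchy, mul_smul] at h1
  rw [two_mul, ← two_smul ℝ]
  exact h1.unique h2

end

section

-- Any submultiplicative norm will do: the entrywise topology in `matCos` is the one it induces.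
attribute [local instance] Matrix.linftyOpNormedRing Matrix.linftyOpNormedAlgebra

lemma matCos_add_law {N : ℕ} (A : Matrix (Fin N) (Fin N) ℝ) (t s : ℝ) :
    matCos (t + s) A + matCos (t - s) A = 2 * (matCos t A * matCos s A) :=
  cosSeries_add_law A t s

end

/-- the matrix cosine addition law
`g(t+s, A) + g(t−s, A) = 2 g(t, A) g(s, A)`. -/
theorem rom_backprojection_stmt1 {N : ℕ} (A : Matrix (Fin N) (Fin N) ℝ) (t s : ℝ) :
    matCos (t + s) A + matCos (t - s) A = 2 * (matCos t A * matCos s A) := by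
  exact matCos_add_law A t s
end

section
/- Let A be a real N×N matrix, τ a real number, and k a natural number. Then the k-th Chebyshev polynomial of the first kind evaluated at the propagator g(τ, A) equals g(kτ, A): aeval (g(τ, A)) (T k) = g(kτ, A). (That is, cos(kτ√(−A)) = T_k(cos(τ√(−A))) holds at the matrix level.) -/
/-- The block matrix `[[0, A], [1, 0]]`, a square root of `diag(A, A)`. -/
def blockSqrt {N : ℕ} (A : Matrix (Fin N) (Fin N) ℝ) :
    Matrix (Fin N ⊕ Fin N) (Fin N ⊕ Fin N) ℝ :=
  Matrix.fromBlocks 0 A 1 0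

lemma blockSqrt_pow_two_mul {N : ℕ} (A : Matrix (Fin N) (Fin N) ℝ) (j : ℕ) :
    blockSqrt A ^ (2 * j) = Matrix.fromBlocks (A ^ j) 0 0 (A ^ j) := by
  rw [pow_mul]
  induction j with
  | zero => simp
  | succ j ih =>
    rw [pow_succ, ih, pow_two, blockSqrt, Matrix.fromBlocks_multiply, Matrix.fromBlocks_multiply]
    simp [pow_succ]

open scoped Matrix.Norms.Operator in
/-- The exponential series converges for the entrywise topology. The operator norm used in the
proof does not appear in the statement. -/
lemma hasSum_matrix_exp {n : Type*} [Fintype n] [DecidableEq n] (M : Matrix n n ℝ) :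
    HasSum (fun k : ℕ => ((k.factorial : ℝ)⁻¹) • M ^ k) (NormedSpace.exp M) := by
  exact NormedSpace.exp_series_hasSum_exp' (𝕂 := ℝ) M

/-- `2 cosh (tB)` as a power series in `B ^ 2`: the odd terms of the two exponentials cancel. -/
lemma hasSum_exp_add_exp_neg {N : ℕ} (A : Matrix (Fin N) (Fin N) ℝ) (t : ℝ) :
    HasSum (fun j : ℕ => (2 * (t ^ (2 * j) / ((2 * j).factorial : ℝ))) •
        Matrix.fromBlocks (A ^ j) 0 0 (A ^ j))
      (NormedSpace.exp (t • blockSqrt A) + NormedSpace.exp ((-t) • blockSqrt A)) := by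
  have h := (hasSum_matrix_exp (t • blockSqrt A)).add
    (hasSum_matrix_exp ((-t) • blockSqrt A))
  -- The support of the summand lies in the even numbers, so the sum may be reindexed by `n = 2 j`.
  have hinj : Function.Injective (fun j : ℕ => 2 * j) := fun a b hab => by
    simpa using hab
  rw [← hinj.hasSum_iff] at h
  · convert h using 2 with j
    simp only [Function.comp, smul_pow, smul_smul, ← add_smul, blockSqrt_pow_two_mul]
    congr 1
    rw [(even_two_mul j).neg_pow]
    ring
  · intro n hn
    have hodd : Odd n := by
      rw [← Nat.not_even_iff_odd]
      rintro ⟨j, rfl⟩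
      exact hn ⟨j, by simp only; ring⟩
    simp [smul_pow, hodd.neg_pow]

lemma hasSum_matCos {N : ℕ} (A : Matrix (Fin N) (Fin N) ℝ) (t : ℝ) :
    HasSum (fun j : ℕ => (t ^ (2 * j) / ((2 * j).factorial : ℝ)) • A ^ j) (matCos t A) := by
  -- Summability is inherited from the exponential series through the upper left block.
  let f : Matrix (Fin N ⊕ Fin N) (Fin N ⊕ Fin N) ℝ →+ Matrix (Fin N) (Fin N) ℝ :=
    { toFun := Matrix.toBlocks₁₁, map_zero' := rfl, map_add' := fun _ _ => rfl }
  have hf : Continuous f := continuous_id.matrix_submatrix Sum.inl Sum.inl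
  have h := ((hasSum_exp_add_exp_neg A t).summable.map f hf).const_smul (1 / 2 : ℝ)
  refine Summable.hasSum (h.congr fun j => ?_)
  change (1 / 2 : ℝ) • Matrix.toBlocks₁₁ ((2 * (t ^ (2 * j) / ((2 * j).factorial : ℝ))) •
    Matrix.fromBlocks (A ^ j) 0 0 (A ^ j)) = _
  rw [Matrix.fromBlocks_smul, Matrix.toBlocks_fromBlocks₁₁, smul_smul]
  congr 1
  ring

lemma fromBlocks_matCos {N : ℕ} (A : Matrix (Fin N) (Fin N) ℝ) (t : ℝ) :
    (2 : ℝ) • Matrix.fromBlocks (matCos t A) 0 0 (matCos t A) =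
      NormedSpace.exp (t • blockSqrt A) + NormedSpace.exp ((-t) • blockSqrt A) := by
  let f : Matrix (Fin N) (Fin N) ℝ →+ Matrix (Fin N ⊕ Fin N) (Fin N ⊕ Fin N) ℝ :=
    { toFun := fun M => Matrix.fromBlocks M 0 0 M
      map_zero' := Matrix.fromBlocks_zero
      map_add' := fun _ _ => by simp [Matrix.fromBlocks_add] }
  have hf : Continuous f :=
    continuous_id.matrix_fromBlocks continuous_const continuous_const continuous_id
  have h := ((hasSum_matCos A t).map f hf).const_smul (2 : ℝ)
  refine HasSum.unique h ?_
  convert hasSum_exp_add_exp_neg A t using 2 with j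
  simp [f, Matrix.fromBlocks_smul, smul_smul]

lemma two_mul_matCos_mul_matCos {N : ℕ} (A : Matrix (Fin N) (Fin N) ℝ) (s t : ℝ) :
    2 * matCos t A * matCos s A = matCos (s + t) A + matCos (s - t) A := by
  have hexp (a b : ℝ) : NormedSpace.exp (a • blockSqrt A) * NormedSpace.exp (b • blockSqrt A) =
      NormedSpace.exp ((a + b) • blockSqrt A) := by
    rw [add_smul, Matrix.exp_add_of_commute]
    exact ((Commute.refl _).smul_left a).smul_right b
  have h : ((2 : ℝ) • Matrix.fromBlocks (matCos t A) 0 0 (matCos t A)) *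
      ((2 : ℝ) • Matrix.fromBlocks (matCos s A) 0 0 (matCos s A)) =
      (2 : ℝ) • Matrix.fromBlocks (matCos (s + t) A) 0 0 (matCos (s + t) A) +
      (2 : ℝ) • Matrix.fromBlocks (matCos (s - t) A) 0 0 (matCos (s - t) A) := by
    simp only [fromBlocks_matCos, add_mul, mul_add, hexp]
    rw [show t + s = s + t by ring, show t + -s = -(s - t) by ring, show -t + s = s - t by ring,
      show -t + -s = -(s + t) by ring]
    abel
  have h' := congrArg Matrix.toBlocks₁₁ h
  simp only [Matrix.fromBlocks_smul, Matrix.fromBlocks_multiply, Matrix.fromBlocks_add,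
    Matrix.toBlocks_fromBlocks₁₁, smul_zero, mul_zero, add_zero, ← smul_add] at h'
  rw [smul_mul_smul_comm, mul_smul] at h'
  have h2 := smul_right_injective _ (two_ne_zero (α := ℝ)) h'
  rw [← h2, two_smul, two_mul, add_mul]

lemma matCos_zero {N : ℕ} (A : Matrix (Fin N) (Fin N) ℝ) : matCos 0 A = 1 := by
  rw [matCos, tsum_eq_single 0]
  · simp
  · intro j hj
    simp [hj]

/-- the `k`-th Chebyshev polynomial of the first kind evaluated at the
propagator `g(τ, A)` equals `g(kτ, A)`, i.e. `cos(kτ√(−A)) = T_k(cos(τ√(−A)))` at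
the matrix level. -/
theorem rom_backprojection_stmt3 {N : ℕ} (A : Matrix (Fin N) (Fin N) ℝ) (τ : ℝ) (k : ℕ) :
    Polynomial.aeval (matCos τ A) (Polynomial.Chebyshev.T ℝ k) = matCos ((k : ℝ) * τ) A := by
  induction k using Nat.twoStepInduction with
  | zero => simp [matCos_zero]
  | one => simp
  | more k ih0 ih1 =>
    push_cast at ih0 ih1 ⊢
    rw [Polynomial.Chebyshev.T_add_two, map_sub, map_mul, ih0, ih1, map_mul, Polynomial.aeval_X,
      map_ofNat, two_mul_matCos_mul_matCos, show ((k : ℝ) + 1) * τ - τ = k * τ by ring,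
      show ((k : ℝ) + 1) * τ + τ = (k + 2) * τ by ring, add_sub_cancel_right]
end

section
/- Let P be a symmetric real N×N matrix and B a real N×p matrix. For k ∈ ℤ define the snapshots u_k := aeval P (T k) * B and the data samples F_k := Bᵀ * aeval P (T k) * B. Then for all i, j ∈ ℤ, the Gram matrix of snapshots is determined by the data: u_iᵀ * u_j = (1/2) * (F_{i+j} + F_{i−j}). -/
open Matrix

/-- A polynomial in a symmetric matrix is symmetric. -/
lemma transpose_aeval_of_transpose_eq {N : ℕ} {P : Matrix (Fin N) (Fin N) ℝ} (hP : Pᵀ = P)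
    (q : Polynomial ℝ) : (Polynomial.aeval P q)ᵀ = Polynomial.aeval P q := by
  induction q using Polynomial.induction_on' with
  | add a b ha hb => simp [ha, hb]
  | monomial n c =>
    simp [Polynomial.aeval_monomial, ← Algebra.smul_def, Matrix.transpose_pow, hP]

/-- for a symmetric propagator `P`, the Gram matrix of the Chebyshev
snapshots `u_k = T_k(P) B` is determined by the data samples `F_k = Bᵀ T_k(P) B`:
`u_iᵀ u_j = (1/2)(F_{i+j} + F_{i−j})`. -/
theorem rom_backprojection_stmt6 {N p : ℕ}
    (P : Matrix (Fin N) (Fin N) ℝ) (hP : Pᵀ = P)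
    (B : Matrix (Fin N) (Fin p) ℝ)
    (u : ℤ → Matrix (Fin N) (Fin p) ℝ)
    (hu : ∀ k : ℤ, u k = Polynomial.aeval P (Polynomial.Chebyshev.T ℝ k) * B)
    (F : ℤ → Matrix (Fin p) (Fin p) ℝ)
    (hF : ∀ k : ℤ, F k = Bᵀ * Polynomial.aeval P (Polynomial.Chebyshev.T ℝ k) * B) :
    ∀ i j : ℤ, (u i)ᵀ * u j = (1 / 2 : ℝ) • (F (i + j) + F (i - j)) := by
  intro i j
  have h := congrArg (Polynomial.aeval P) (Polynomial.Chebyshev.T_mul_T ℝ i j)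
  rw [mul_assoc, two_mul, map_add, map_add, map_mul] at h
  rw [hu, hu, hF, hF, Matrix.transpose_mul, transpose_aeval_of_transpose_eq hP,
    ← Matrix.add_mul, ← Matrix.mul_add, ← h, ← two_smul ℝ, Matrix.mul_smul, Matrix.smul_mul,
    smul_smul]
  norm_num [Matrix.mul_assoc]
end

section
/- Let P be a symmetric real N×N matrix and B a real N×p matrix. For k ∈ ℤ define the snapshots u_k := aeval P (T k) * B and the data samples F_k := Bᵀ * aeval P (T k) * B. Then for all i, j ∈ ℤ, the snapshot inner products with respect to the propagator are determined by the data: u_iᵀ * P * u_j = (1/4) * (F_{i+j+1} + F_{i−j+1} + F_{i+j−1} + F_{i−j−1}). -/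
open Matrix

/-!
A polynomial in a symmetric matrix is symmetric, so `u_iᵀ P u_j = Bᵀ (T_i X T_j)(P) B`.
Applying the product formula `2 T_m T_k = T_{m+k} + T_{m-k}` first to `T_i T_j` and then to the
products with `X = T_1` expresses `4 T_i X T_j` as a sum of four Chebyshev polynomials, and
evaluating at `P` gives the four data samples.
-/

theorem transpose_aeval_of_symm {N : ℕ} (P : Matrix (Fin N) (Fin N) ℝ) (hP : Pᵀ = P)
    (q : Polynomial ℝ) : (Polynomial.aeval P q)ᵀ = Polynomial.aeval P q := by
  induction q using Polynomial.induction_on' with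
  | add a b ha hb => rw [map_add, transpose_add, ha, hb]
  | monomial n a =>
    rw [Polynomial.aeval_monomial, ← Algebra.smul_def, transpose_smul, transpose_pow, hP]

theorem four_mul_T_mul_X_mul_T (i j : ℤ) :
    (4 : ℝ) • (Polynomial.Chebyshev.T ℝ i * Polynomial.X * Polynomial.Chebyshev.T ℝ j) =
      Polynomial.Chebyshev.T ℝ (i + j + 1) + Polynomial.Chebyshev.T ℝ (i - j + 1) +
        Polynomial.Chebyshev.T ℝ (i + j - 1) + Polynomial.Chebyshev.T ℝ (i - j - 1) := by
  have h := Polynomial.Chebyshev.T_mul_T ℝ i j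
  have h1 := Polynomial.Chebyshev.T_mul_T ℝ (i + j) 1
  have h2 := Polynomial.Chebyshev.T_mul_T ℝ (i - j) 1
  rw [Polynomial.Chebyshev.T_one] at h1 h2
  rw [Polynomial.smul_eq_C_mul, map_ofNat]
  linear_combination 2 * Polynomial.X * h + h1 + h2

/-- for a symmetric propagator `P`, the snapshot inner products with
respect to the propagator are determined by the data samples `F_k = Bᵀ T_k(P) B`:
`u_iᵀ P u_j = (1/4)(F_{i+j+1} + F_{i−j+1} + F_{i+j−1} + F_{i−j−1})`. -/
theorem rom_backprojection_stmt7 {N p : ℕ}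
    (P : Matrix (Fin N) (Fin N) ℝ) (hP : Pᵀ = P)
    (B : Matrix (Fin N) (Fin p) ℝ)
    (u : ℤ → Matrix (Fin N) (Fin p) ℝ)
    (hu : ∀ k : ℤ, u k = Polynomial.aeval P (Polynomial.Chebyshev.T ℝ k) * B)
    (F : ℤ → Matrix (Fin p) (Fin p) ℝ)
    (hF : ∀ k : ℤ, F k = Bᵀ * Polynomial.aeval P (Polynomial.Chebyshev.T ℝ k) * B) :
    ∀ i j : ℤ, (u i)ᵀ * P * u j =
      (1 / 4 : ℝ) • (F (i + j + 1) + F (i - j + 1) + F (i + j - 1) + F (i - j - 1)) := by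
  intro i j
  have h := congrArg (Polynomial.aeval P) (four_mul_T_mul_X_mul_T i j)
  simp only [map_smul, map_mul, map_add, Polynomial.aeval_X] at h
  rw [hu, hu, hF, hF, hF, hF, transpose_mul, transpose_aeval_of_symm P hP]
  simp only [← Matrix.add_mul, ← Matrix.mul_add]
  rw [← h, Matrix.mul_smul, Matrix.smul_mul, smul_smul]
  norm_num [Matrix.mul_assoc]
end

section
/- Let P be a real N×N matrix, B a real N×p matrix, V a real N×m matrix with orthonormal columns (Vᵀ * V = I), and κ a natural number. Assume that for every j ≤ κ the columns of P^j * B lie in the column span of V, i.e., V * Vᵀ * (P^j * B) = P^j * B for all j ≤ κ. Then the Galerkin projection is exact up to step κ: for every k ≤ κ, (Vᵀ * P * V)^k * (Vᵀ * B) = Vᵀ * (P^k * B). -/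
open Matrix

/-- if the columns of `P^j B` lie in the column span of an orthonormal
`V` (`Vᵀ V = I`) for all `j ≤ κ`, then the Galerkin projection is exact up to step
`κ`: `(Vᵀ P V)^k (Vᵀ B) = Vᵀ (P^k B)` for every `k ≤ κ`. -/
theorem rom_backprojection_stmt8 {N p m : ℕ}
    (P : Matrix (Fin N) (Fin N) ℝ) (B : Matrix (Fin N) (Fin p) ℝ)
    (V : Matrix (Fin N) (Fin m) ℝ) (hV : Vᵀ * V = 1)
    (κ : ℕ)
    (hspan : ∀ j ≤ κ, V * Vᵀ * (P ^ j * B) = P ^ j * B) :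
    ∀ k ≤ κ, (Vᵀ * P * V) ^ k * (Vᵀ * B) = Vᵀ * (P ^ k * B) := by
  intro k
  induction k with
  | zero => intro _; simp
  | succ k ih =>
    intro hk
    have hk' : k ≤ κ := Nat.le_of_succ_le hk
    -- `V Vᵀ` fixes `P ^ k B`, so the projector between `P` and `P ^ k B` can be dropped.
    calc (Vᵀ * P * V) ^ (k + 1) * (Vᵀ * B)
        = Vᵀ * P * V * ((Vᵀ * P * V) ^ k * (Vᵀ * B)) := by
          rw [pow_succ', Matrix.mul_assoc]
      _ = Vᵀ * P * (V * Vᵀ * (P ^ k * B)) := by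
          rw [ih hk']; simp only [Matrix.mul_assoc]
      _ = Vᵀ * (P ^ (k + 1) * B) := by
          rw [hspan k hk', pow_succ']; simp only [Matrix.mul_assoc]
end

section
/- Let P be a symmetric real N×N matrix, B a real N×p matrix, V a real N×m matrix with Vᵀ * V = I, and n ≥ 1 a natural number. Assume V * Vᵀ * (P^j * B) = P^j * B for every j ≤ n−1. Let P̃ := Vᵀ * P * V and B̃ := Vᵀ * B. Then the reduced order model matches the first 2n power moments of the data: B̃ᵀ * P̃^k * B̃ = Bᵀ * P^k * B for every k with 0 ≤ k ≤ 2n−1. -/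
/-!
For `j ≤ n - 1` the columns of `P ^ j * B` are fixed by the projection `V * Vᵀ`, so by induction
the reduced model reproduces the snapshots: `P̃ ^ j * B̃ = Vᵀ * (P ^ j * B)`. A moment of order
`k = i + 1 + j` with `i, j ≤ n - 1` is, by symmetry of `P` and `P̃`, a pairing of the snapshots
`i` and `j` through `P`, in which both copies of `V * Vᵀ` are absorbed by the snapshots.
-/

open Matrix

/-- The reduced snapshots are the coordinates of the full snapshots in the basis `V`. -/
lemma rom_snapshot {N p m : ℕ} (P : Matrix (Fin N) (Fin N) ℝ) (B : Matrix (Fin N) (Fin p) ℝ)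
    (V : Matrix (Fin N) (Fin m) ℝ) (n : ℕ)
    (hspan : ∀ j ≤ n - 1, V * Vᵀ * (P ^ j * B) = P ^ j * B) :
    ∀ j ≤ n - 1, (Vᵀ * P * V) ^ j * (Vᵀ * B) = Vᵀ * (P ^ j * B) := by
  intro j
  induction j with
  | zero => intro _; simp
  | succ j ih =>
    intro hj
    have hj' : j ≤ n - 1 := by omega
    calc (Vᵀ * P * V) ^ (j + 1) * (Vᵀ * B)
        = Vᵀ * P * V * ((Vᵀ * P * V) ^ j * (Vᵀ * B)) := by
          rw [pow_succ', Matrix.mul_assoc]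
      _ = Vᵀ * P * (V * Vᵀ * (P ^ j * B)) := by
          rw [ih hj']; simp only [Matrix.mul_assoc]
      _ = Vᵀ * (P ^ (j + 1) * B) := by
          rw [hspan j hj', pow_succ']; simp only [Matrix.mul_assoc]

/-- if `P` is symmetric and the columns of `P^j B` lie in the column
span of an orthonormal `V` (`Vᵀ V = I`) for all `j ≤ n−1`, then the reduced order
model `P̃ = Vᵀ P V`, `B̃ = Vᵀ B` matches the first `2n` power moments of the data:
`B̃ᵀ P̃^k B̃ = Bᵀ P^k B` for `0 ≤ k ≤ 2n−1`. -/
theorem rom_backprojection_stmt9 {N p m : ℕ}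
    (P : Matrix (Fin N) (Fin N) ℝ) (hP : Pᵀ = P)
    (B : Matrix (Fin N) (Fin p) ℝ)
    (V : Matrix (Fin N) (Fin m) ℝ) (hV : Vᵀ * V = 1)
    (n : ℕ) (hn : 1 ≤ n)
    (hspan : ∀ j ≤ n - 1, V * Vᵀ * (P ^ j * B) = P ^ j * B)
    (Ptil : Matrix (Fin m) (Fin m) ℝ) (hPtil : Ptil = Vᵀ * P * V)
    (Btil : Matrix (Fin m) (Fin p) ℝ) (hBtil : Btil = Vᵀ * B) :
    ∀ k ≤ 2 * n - 1, Btilᵀ * Ptil ^ k * Btil = Bᵀ * P ^ k * B := by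
  subst hPtil hBtil
  intro k hk
  rcases Nat.eq_zero_or_pos k with rfl | hk0
  · have h := hspan 0 (Nat.zero_le _)
    simp only [pow_zero, Matrix.one_mul, Matrix.mul_one, Matrix.transpose_mul,
      Matrix.transpose_transpose, Matrix.mul_assoc] at h ⊢
    rw [h]
  · obtain ⟨i, j, hi, hj, rfl⟩ : ∃ i j, i ≤ n - 1 ∧ j ≤ n - 1 ∧ k = i + 1 + j :=
      ⟨(k - 1) / 2, k - 1 - (k - 1) / 2, by omega, by omega, by omega⟩
    have hsym : (Vᵀ * P * V)ᵀ = Vᵀ * P * V := by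
      simp [Matrix.transpose_mul, hP, Matrix.mul_assoc]
    have hright := rom_snapshot P B V n hspan j hj
    have hleft : (Vᵀ * B)ᵀ * (Vᵀ * P * V) ^ i = Bᵀ * P ^ i * V := by
      have h := congrArg Matrix.transpose (rom_snapshot P B V n hspan i hi)
      rw [Matrix.transpose_mul, Matrix.transpose_pow, hsym] at h
      rw [h]
      simp [Matrix.transpose_mul, Matrix.transpose_pow, hP]
    have habs : Bᵀ * P ^ i * (V * Vᵀ) = Bᵀ * P ^ i := by
      have h := congrArg Matrix.transpose (hspan i hi)
      simpa only [Matrix.transpose_mul, Matrix.transpose_pow, Matrix.transpose_transpose, hP]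
        using h
    calc (Vᵀ * B)ᵀ * (Vᵀ * P * V) ^ (i + 1 + j) * (Vᵀ * B)
        = ((Vᵀ * B)ᵀ * (Vᵀ * P * V) ^ i) * (Vᵀ * P * V)
            * ((Vᵀ * P * V) ^ j * (Vᵀ * B)) := by
          rw [pow_add, pow_succ]; simp only [Matrix.mul_assoc]
      _ = (Bᵀ * P ^ i * (V * Vᵀ)) * P * (V * Vᵀ * (P ^ j * B)) := by
          rw [hleft, hright]; simp only [Matrix.mul_assoc]
      _ = Bᵀ * P ^ (i + 1 + j) * B := by
          rw [habs, hspan j hj, pow_add, pow_succ]; simp only [Matrix.mul_assoc]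
end

section
/- Let P be a symmetric real N×N matrix, B a real N×p matrix, V a real N×m matrix with Vᵀ * V = I, and n ≥ 1. Assume V * Vᵀ * (P^j * B) = P^j * B for every j ≤ n−1. Let P̃ := Vᵀ * P * V and B̃ := Vᵀ * B. Then the reduced order model interpolates all 2n Chebyshev data samples: B̃ᵀ * aeval P̃ (T k) * B̃ = Bᵀ * aeval P (T k) * B for every natural number k with 0 ≤ k ≤ 2n−1. -/
open Matrix

/-! Chebyshev polynomials enter only through `deg T_k = k`: by linearity it suffices to match the
moments `Bᵀ P^k B` for `k ≤ 2n - 1`. The reduced snapshots satisfy `P̃^j B̃ = Vᵀ P^j B` for all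
`j ≤ n`, one step further than the snapshots fixed by the projection `V Vᵀ`
(`reduced_pow_mul`). Splitting `k = i + j` with `i ≤ n - 1` and `j ≤ n`, and using the symmetry
of `P`, the reduced moment is `(V Vᵀ P^i B)ᵀ P^j B = (P^i B)ᵀ P^j B = Bᵀ P^k B`
(`reduced_moment`). -/

/-- The reduced snapshots are the coordinates of the true ones; the induction step from `j` to
`j + 1` uses the span hypothesis at `j` only, so the identity reaches `j = n`. -/
lemma reduced_pow_mul {N p m : ℕ}
    (P : Matrix (Fin N) (Fin N) ℝ) (B : Matrix (Fin N) (Fin p) ℝ)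
    (V : Matrix (Fin N) (Fin m) ℝ) (n : ℕ)
    (hspan : ∀ j < n, V * Vᵀ * (P ^ j * B) = P ^ j * B) (j : ℕ) (hj : j ≤ n) :
    (Vᵀ * P * V) ^ j * (Vᵀ * B) = Vᵀ * (P ^ j * B) := by
  induction j with
  | zero => simp
  | succ j ih =>
    calc (Vᵀ * P * V) ^ (j + 1) * (Vᵀ * B)
        = (Vᵀ * P * V) * ((Vᵀ * P * V) ^ j * (Vᵀ * B)) := by
          rw [pow_succ', Matrix.mul_assoc]
      _ = Vᵀ * P * (V * Vᵀ * (P ^ j * B)) := by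
          rw [ih (by omega)]; simp only [Matrix.mul_assoc]
      _ = Vᵀ * (P ^ (j + 1) * B) := by
          rw [hspan j (by omega), pow_succ']; simp only [Matrix.mul_assoc]

lemma reduced_moment {N p m : ℕ}
    (P : Matrix (Fin N) (Fin N) ℝ) (hP : Pᵀ = P) (B : Matrix (Fin N) (Fin p) ℝ)
    (V : Matrix (Fin N) (Fin m) ℝ) (n : ℕ)
    (hspan : ∀ j < n, V * Vᵀ * (P ^ j * B) = P ^ j * B) (i j : ℕ) (hi : i < n) (hj : j ≤ n) :
    (Vᵀ * B)ᵀ * (Vᵀ * P * V) ^ (i + j) * (Vᵀ * B) = Bᵀ * P ^ (i + j) * B := by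
  have hsymm : (Vᵀ * P * V)ᵀ = Vᵀ * P * V := by
    simp [Matrix.transpose_mul, hP, Matrix.mul_assoc]
  calc (Vᵀ * B)ᵀ * (Vᵀ * P * V) ^ (i + j) * (Vᵀ * B)
      = ((Vᵀ * P * V) ^ i * (Vᵀ * B))ᵀ * ((Vᵀ * P * V) ^ j * (Vᵀ * B)) := by
        rw [Matrix.transpose_mul ((Vᵀ * P * V) ^ i), Matrix.transpose_pow, hsymm, pow_add]
        simp only [Matrix.mul_assoc]
    _ = (V * Vᵀ * (P ^ i * B))ᵀ * (P ^ j * B) := by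
        rw [reduced_pow_mul P B V n hspan i hi.le, reduced_pow_mul P B V n hspan j hj]
        simp only [Matrix.transpose_mul, Matrix.transpose_transpose, Matrix.mul_assoc]
    _ = Bᵀ * P ^ (i + j) * B := by
        rw [hspan i hi, Matrix.transpose_mul, Matrix.transpose_pow, hP, pow_add]
        simp only [Matrix.mul_assoc]

/-- if `P` is symmetric and the columns of `P^j B` lie in the column
span of an orthonormal `V` (`Vᵀ V = I`) for all `j ≤ n−1`, then the reduced order
model `P̃ = Vᵀ P V`, `B̃ = Vᵀ B` interpolates all `2n` Chebyshev data samples: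
`B̃ᵀ T_k(P̃) B̃ = Bᵀ T_k(P) B` for `0 ≤ k ≤ 2n−1`. -/
theorem rom_backprojection_stmt10 {N p m : ℕ}
    (P : Matrix (Fin N) (Fin N) ℝ) (hP : Pᵀ = P)
    (B : Matrix (Fin N) (Fin p) ℝ)
    (V : Matrix (Fin N) (Fin m) ℝ) (hV : Vᵀ * V = 1)
    (n : ℕ) (hn : 1 ≤ n)
    (hspan : ∀ j ≤ n - 1, V * Vᵀ * (P ^ j * B) = P ^ j * B)
    (Ptil : Matrix (Fin m) (Fin m) ℝ) (hPtil : Ptil = Vᵀ * P * V)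
    (Btil : Matrix (Fin m) (Fin p) ℝ) (hBtil : Btil = Vᵀ * B) :
    ∀ k : ℕ, k ≤ 2 * n - 1 →
      Btilᵀ * Polynomial.aeval Ptil (Polynomial.Chebyshev.T ℝ k) * Btil =
        Bᵀ * Polynomial.aeval P (Polynomial.Chebyshev.T ℝ k) * B := by
  subst hPtil hBtil
  intro k hk
  simp only [Polynomial.aeval_eq_sum_range, Polynomial.Chebyshev.natDegree_T, Int.natAbs_natCast,
    Matrix.mul_sum, Matrix.sum_mul, Matrix.mul_smul, Matrix.smul_mul]
  refine Finset.sum_congr rfl fun l hl => ?_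
  rw [Finset.mem_range] at hl
  congr 1
  have h := reduced_moment P hP B V n (fun j hj => hspan j (by omega))
    (min l (n - 1)) (l - min l (n - 1)) (by omega) (by omega)
  rwa [Nat.add_sub_cancel' (min_le_left _ _)] at h
end

section
/- Let P be a real N×N matrix, B a real N×p matrix, and n ≥ 1 a natural number. Then the subspace of ℝ^N spanned by the columns of the Chebyshev snapshots aeval P (T j) * B for 0 ≤ j ≤ n−1 equals the subspace spanned by the columns of the power snapshots P^j * B for 0 ≤ j ≤ n−1. -/
open Matrix

/-!
For a fixed column index `c`, the map sending a polynomial `q` to column `c` of `q(P) B` is linear.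
Any family of real polynomials `S 0, S 1, …` with `deg (S j) = j` has `S 0, …, S (n - 1)` spanning
the space of polynomials of degree `< n`, so the span of the columns of the `S j (P) B`, `j < n`, is
the supremum over `c` of the images of that space, which does not depend on `S`. The theorem
compares the Chebyshev family with the monomials.
-/

/-- The linear map sending a polynomial `q` to column `c` of `q(P) B`. -/
noncomputable def polyColumn {N p : ℕ} (P : Matrix (Fin N) (Fin N) ℝ) (B : Matrix (Fin N) (Fin p) ℝ)
    (c : Fin p) : Polynomial ℝ →ₗ[ℝ] (Fin N → ℝ) where
  toFun q := (Polynomial.aeval P q * B)ᵀ c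
  map_add' q r := by rw [map_add, Matrix.add_mul]; rfl
  map_smul' a q := by rw [map_smul, Matrix.smul_mul]; rfl

/-- The span of the columns does not depend on the choice of the polynomial sequence `S`. -/
theorem span_columns_sequence {N p : ℕ} (P : Matrix (Fin N) (Fin N) ℝ)
    (B : Matrix (Fin N) (Fin p) ℝ) (n : ℕ) (S : Polynomial.Sequence ℝ) :
    Submodule.span ℝ
        (⋃ j ∈ Finset.range n,
          Set.range fun c : Fin p => ((Polynomial.aeval P (S j) * B)ᵀ c : Fin N → ℝ)) =
      ⨆ c, (Polynomial.degreeLT ℝ n).map (polyColumn P B c) := by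
  have hS : ∀ i < n, IsUnit (S i).leadingCoeff := fun i _ =>
    (Polynomial.leadingCoeff_ne_zero.mpr (S.ne_zero i)).isUnit
  simp_rw [← S.span_degreeLT hS, Submodule.map_span, ← Submodule.span_iUnion]
  congr 1
  ext v
  simp only [Set.mem_iUnion, Set.mem_range, Set.mem_image, Finset.mem_range, Set.mem_Iio]
  constructor
  · rintro ⟨j, hj, c, rfl⟩
    exact ⟨c, S j, ⟨j, hj, rfl⟩, rfl⟩
  · rintro ⟨c, _, ⟨j, hj, rfl⟩, rfl⟩
    exact ⟨j, hj, c, rfl⟩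

/-- the subspace of `ℝ^N` spanned by the columns of the Chebyshev
snapshots `T_j(P) B`, `0 ≤ j ≤ n−1`, equals the subspace spanned by the columns of
the power snapshots `P^j B`, `0 ≤ j ≤ n−1`. -/
theorem rom_backprojection_stmt11 {N p : ℕ}
    (P : Matrix (Fin N) (Fin N) ℝ) (B : Matrix (Fin N) (Fin p) ℝ)
    (n : ℕ) (hn : 1 ≤ n) :
    Submodule.span ℝ
        (⋃ j ∈ Finset.range n,
          Set.range fun c : Fin p =>
            ((Polynomial.aeval P (Polynomial.Chebyshev.T ℝ j) * B)ᵀ c : Fin N → ℝ)) =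
      Submodule.span ℝ
        (⋃ j ∈ Finset.range n,
          Set.range fun c : Fin p => ((P ^ j * B)ᵀ c : Fin N → ℝ)) := by
  have hT := span_columns_sequence P B n (Polynomial.Chebyshev.chebyshevTsequence ℝ)
  have hX := span_columns_sequence P B n
    ⟨fun j => Polynomial.X ^ j, fun j => Polynomial.degree_X_pow j⟩
  refine hT.trans (hX.symm.trans ?_)
  change Submodule.span ℝ (⋃ j ∈ Finset.range n, Set.range fun c : Fin p =>
    ((Polynomial.aeval P (Polynomial.X ^ j) * B)ᵀ c : Fin N → ℝ)) = _
  simp only [map_pow, Polynomial.aeval_X]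
end
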